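/- Let G be a linear space equipped with a sequence of norms (‖·‖_n)_{n∈ℤ} such that each G_n = (G,‖·‖_n) is a Banach space and such that (ℓ^q₀(G_n), ℓ^q₁(G_n)) forms a Banach couple. Let ρ be a function parameter of class ℬ^{+−} and 0 < q ≤ ∞. Then (ℓ^q₀(G_n), ℓ^q₁(G_n))_{ρ,q;K} = ℓ^q_f(G_n) with equivalent norms, where f(t) = 1/ρ(t⁻¹). -/

import Mathlib

open Filter Set MeasureTheory ENNReal NNReal

noncomputable section

/-! ### Function parameters -/

/-- `rbar ρ s = sup_{t>0} ρ(s t)/ρ(t)`. -/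
def rbar (ρ : ℝ → ℝ) (s : ℝ) : ℝ := sSup {r : ℝ | ∃ t > 0, r = ρ (s * t) / ρ t}

/-- The class `ℬ` of function parameters. -/
structure IsClassB (ρ : ℝ → ℝ) : Prop where
  pos : ∀ t > 0, 0 < ρ t
  cont : ContinuousOn ρ (Set.Ioi 0)
  one : ρ 1 = 1
  bdd : ∀ s > 0, BddAbove {r : ℝ | ∃ t > 0, r = ρ (s * t) / ρ t}

/-- The class `ℬ^{+-}` of function parameters. -/
structure IsClassBpm (ρ : ℝ → ℝ) extends IsClassB ρ : Prop where
  integ : MeasureTheory.IntegrableOn (fun t => min 1 t⁻¹ * rbar ρ t * t⁻¹) (Set.Ioi 0)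

/-- Pseudo-concavity of a function parameter. -/
def IsPseudoConcave (ρ : ℝ → ℝ) : Prop :=
  ∃ C > 0, ∀ s > 0, ∀ t > 0, ρ t ≤ C * max 1 (t / s) * ρ s

/-! ### `ℓ^q` norms of two-sided sequences with values in `ℝ≥0∞` -/

/-- The `ℓ^q(ℤ)` norm of a sequence of extended reals. -/
def eLq (q : ℝ≥0∞) (a : ℤ → ℝ≥0∞) : ℝ≥0∞ :=
  if q = ∞ then ⨆ n, a n else (∑' n, a n ^ q.toReal) ^ (1 / q.toReal)

/-! ### Extended-real-valued norms -/

/-- `N : V → ℝ≥0∞` is a complete (Banach) extended norm; its finiteness set is the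
underlying Banach space. -/
structure IsENorm {V : Type*} [AddCommGroup V] [Module ℝ V] (N : V → ℝ≥0∞) : Prop where
  map_zero : N 0 = 0
  eq_zero : ∀ x, N x = 0 → x = 0
  add_le : ∀ x y, N (x + y) ≤ N x + N y
  smul : ∀ (c : ℝ) (x : V), N (c • x) = ENNReal.ofReal |c| * N x
  complete : ∀ u : ℕ → V, (∀ n, N (u n) ≠ ∞) →
    (∀ ε : ℝ, 0 < ε → ∃ n₀ : ℕ, ∀ m ≥ n₀, ∀ n ≥ n₀, N (u m - u n) < ENNReal.ofReal ε) →
    ∃ x, N x ≠ ∞ ∧ Filter.Tendsto (fun n => N (u n - x)) Filter.atTop (nhds 0)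

/-! ### Banach couples realized inside an ambient space -/

section Couple

variable {E₀ E₁ V : Type*} [NormedAddCommGroup E₀] [NormedSpace ℝ E₀]
  [NormedAddCommGroup E₁] [NormedSpace ℝ E₁] [AddCommGroup V] [Module ℝ V]

/-- The extended norm on the ambient space induced by the embedding of one Banach space:
`∞` outside the range of the embedding. -/
def enormOf {E : Type*} [NormedAddCommGroup E] [NormedSpace ℝ E] (i : E →ₗ[ℝ] V) (x : V) : ℝ≥0∞ :=
  ⨅ (a : E) (_ : i a = x), (‖a‖₊ : ℝ≥0∞)

/-- The `K`-functional of the couple `(E₀, E₁)`. -/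
def eKfun (i₀ : E₀ →ₗ[ℝ] V) (i₁ : E₁ →ₗ[ℝ] V) (t : ℝ) (x : V) : ℝ≥0∞ :=
  ⨅ (a : E₀) (b : E₁) (_ : x = i₀ a + i₁ b), ENNReal.ofReal (‖a‖ + t * ‖b‖)

/-- The extended norm of `E₀ + E₁`. -/
def esumNorm (i₀ : E₀ →ₗ[ℝ] V) (i₁ : E₁ →ₗ[ℝ] V) (x : V) : ℝ≥0∞ := eKfun i₀ i₁ 1 x

/-- The extended norm of `E₀ ∩ E₁`. -/
def einterNorm (i₀ : E₀ →ₗ[ℝ] V) (i₁ : E₁ →ₗ[ℝ] V) (x : V) : ℝ≥0∞ :=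
  max (enormOf i₀ x) (enormOf i₁ x)

/-- The extended norm of the interpolation space `(E₀,E₁)_{ρ,q;K}`. -/
def eKNorm (i₀ : E₀ →ₗ[ℝ] V) (i₁ : E₁ →ₗ[ℝ] V) (ρ : ℝ → ℝ) (q : ℝ≥0∞) (x : V) : ℝ≥0∞ :=
  eLq q (fun n => eKfun i₀ i₁ ((2 : ℝ) ^ n) x / ENNReal.ofReal (ρ ((2 : ℝ) ^ n)))

/-- `(a, b)` is a `J`-representation of `x`: `u_n = a n = b n ∈ E₀ ∩ E₁` and
`x = ∑_{n ∈ ℤ} u_n` with convergence in `E₀ + E₁`. -/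
def IsJRep (i₀ : E₀ →ₗ[ℝ] V) (i₁ : E₁ →ₗ[ℝ] V) (x : V) (a : ℤ → E₀) (b : ℤ → E₁) : Prop :=
  (∀ n, i₀ (a n) = i₁ (b n)) ∧
  ∀ ε : ℝ, 0 < ε → ∃ F : Finset ℤ, ∀ G : Finset ℤ, F ⊆ G →
    esumNorm i₀ i₁ (x - ∑ n ∈ G, i₀ (a n)) < ENNReal.ofReal ε

/-- The extended norm of the interpolation space `(E₀,E₁)_{ρ,q;J}`. -/
def eJNorm (i₀ : E₀ →ₗ[ℝ] V) (i₁ : E₁ →ₗ[ℝ] V) (ρ : ℝ → ℝ) (q : ℝ≥0∞) (x : V) : ℝ≥0∞ :=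
  ⨅ (a : ℤ → E₀) (b : ℤ → E₁) (_ : IsJRep i₀ i₁ x a b),
    eLq q (fun n => ENNReal.ofReal (max ‖a n‖ ((2 : ℝ) ^ n * ‖b n‖) / ρ ((2 : ℝ) ^ n)))

/-- `(E₀, E₁)` is a Banach couple: both spaces are complete and continuously embedded
in the Hausdorff topological vector space `V`. -/
structure IsBanachCouple [TopologicalSpace V] (i₀ : E₀ →ₗ[ℝ] V) (i₁ : E₁ →ₗ[ℝ] V) : Prop where
  t2 : T2Space V
  contAdd : ContinuousAdd V
  contSMul : ContinuousSMul ℝ V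
  complete₀ : CompleteSpace E₀
  complete₁ : CompleteSpace E₁
  inj₀ : Function.Injective i₀
  inj₁ : Function.Injective i₁
  cont₀ : Continuous i₀
  cont₁ : Continuous i₁

/-- `N` is (the extended norm of) an intermediate space for the couple `(E₀, E₁)`. -/
def IsIntermediate (i₀ : E₀ →ₗ[ℝ] V) (i₁ : E₁ →ₗ[ℝ] V) (N : V → ℝ≥0∞) : Prop :=
  IsENorm N ∧
  (∃ C > 0, ∀ x : V, N x ≤ ENNReal.ofReal C * einterNorm i₀ i₁ x) ∧
  (∃ C > 0, ∀ x : V, esumNorm i₀ i₁ x ≤ ENNReal.ofReal C * N x)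

/-- `N` is an intermediate space of class `J_ρ(E₀,E₁)`, i.e. `(E₀,E₁)_{ρ,1;J} ↪ N`. -/
def IsClassJ (i₀ : E₀ →ₗ[ℝ] V) (i₁ : E₁ →ₗ[ℝ] V) (ρ : ℝ → ℝ) (N : V → ℝ≥0∞) : Prop :=
  IsIntermediate i₀ i₁ N ∧ ∃ C > 0, ∀ x : V, N x ≤ ENNReal.ofReal C * eJNorm i₀ i₁ ρ 1 x

/-- `N` is an intermediate space of class `K_ρ(E₀,E₁)`, i.e. `N ↪ (E₀,E₁)_{ρ,∞;K}`. -/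
def IsClassK (i₀ : E₀ →ₗ[ℝ] V) (i₁ : E₁ →ₗ[ℝ] V) (ρ : ℝ → ℝ) (N : V → ℝ≥0∞) : Prop :=
  IsIntermediate i₀ i₁ N ∧ ∃ C > 0, ∀ x : V, eKNorm i₀ i₁ ρ ⊤ x ≤ ENNReal.ofReal C * N x

end Couple

/-! ### The approximation hypothesis (AP) -/

/-- The couple with extended norms `N₀, N₁` satisfies the approximation hypothesis (AP). -/
def SatisfiesAP {V : Type*} [AddCommGroup V] [Module ℝ V] (N₀ N₁ : V → ℝ≥0∞) : Prop :=
  ∃ (P Pp Pm : ℕ → V →ₗ[ℝ] V) (C : ℝ≥0∞) (c : ℕ → ℝ≥0∞),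
    0 < C ∧ C ≠ ∞ ∧ Filter.Tendsto c Filter.atTop (nhds 0) ∧
    (∀ (n : ℕ) (x y : V), N₀ x ≠ ∞ → N₁ y ≠ ∞ →
      (P n (x + y) + Pp n (x + y) + Pm n (x + y) = x + y ∧
        N₀ (P n (x + y)) ≠ ∞ ∧ N₁ (P n (x + y)) ≠ ∞)) ∧
    (∀ n x, N₀ (P n x) ≤ C * N₀ x) ∧ (∀ n x, N₁ (P n x) ≤ C * N₁ x) ∧
    (∀ n x, N₀ (Pp n x) ≤ C * N₀ x) ∧ (∀ n x, N₁ (Pp n x) ≤ C * N₁ x) ∧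
    (∀ n x, N₀ (Pm n x) ≤ C * N₀ x) ∧ (∀ n x, N₁ (Pm n x) ≤ C * N₁ x) ∧
    (∀ n x, N₀ x ≠ ∞ → N₁ (Pp n x) ≤ c n * N₀ x) ∧
    (∀ n x, N₁ x ≠ ∞ → N₀ (Pm n x) ≤ c n * N₁ x)

/-! ### Bilinear operators -/

section Bilinear

variable {VE VF VG : Type*} [AddCommGroup VG]

/-- The norm of a bilinear operator between spaces given by extended norms. -/
def eBilNorm (NE : VE → ℝ≥0∞) (NF : VF → ℝ≥0∞) (NG : VG → ℝ≥0∞) (T : VE → VF → VG) : ℝ≥0∞ :=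
  ⨆ (x : VE) (_ : NE x ≤ 1) (y : VF) (_ : NF y ≤ 1), NG (T x y)

/-- Boundedness of a bilinear operator between spaces given by extended norms. -/
def eBilBdd (NE : VE → ℝ≥0∞) (NF : VF → ℝ≥0∞) (NG : VG → ℝ≥0∞) (T : VE → VF → VG) : Prop :=
  ∃ M : ℝ≥0, ∀ x y, NG (T x y) ≤ (M : ℝ≥0∞) * NE x * NF y

/-- Compactness of a bilinear operator: the image of the product of unit balls is
totally bounded in the target. -/
def eBilCompact (NE : VE → ℝ≥0∞) (NF : VF → ℝ≥0∞) (NG : VG → ℝ≥0∞) (T : VE → VF → VG) : Prop :=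
  ∀ ε : ℝ, 0 < ε → ∃ D : Finset VG, ∀ x y, NE x ≤ 1 → NF y ≤ 1 →
    ∃ c ∈ D, NG (T x y - c) < ENNReal.ofReal ε

end Bilinear

/-! ### A generic K-functional for a couple given by two extended norms -/

/-- Generic `K`-functional for a couple described by two extended norms on `W`. -/
def eKgen {W : Type*} [AddCommGroup W] (N₀ N₁ : W → ℝ≥0∞) (t : ℝ) (x : W) : ℝ≥0∞ :=
  ⨅ y : W, (N₀ (x - y) + ENNReal.ofReal t * N₁ y)

/-- The `(ρ,q;K)`-interpolation extended norm for a couple given by two extended norms. -/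
def eKNormGen {W : Type*} [AddCommGroup W] (N₀ N₁ : W → ℝ≥0∞) (ρ : ℝ → ℝ) (q : ℝ≥0∞)
    (x : W) : ℝ≥0∞ :=
  eLq q (fun n => eKgen N₀ N₁ ((2 : ℝ) ^ n) x / ENNReal.ofReal (ρ ((2 : ℝ) ^ n)))

/-! ### Lions and Persson approximation conditions -/

section LP

variable {E₀ E₁ V : Type*} [NormedAddCommGroup E₀] [NormedSpace ℝ E₀]
  [NormedAddCommGroup E₁] [NormedSpace ℝ E₁] [AddCommGroup V] [Module ℝ V]

/-- Lions' approximation condition for the couple `(E₀, E₁)`. -/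
def LionsCondition (i₀ : E₀ →ₗ[ℝ] V) (i₁ : E₁ →ₗ[ℝ] V) : Prop :=
  ∃ P : ℕ → V →ₗ[ℝ] V,
    (∀ (n : ℕ) (a : E₀), einterNorm i₀ i₁ (P n (i₀ a)) ≠ ∞) ∧
    (∀ (n : ℕ) (b : E₁), einterNorm i₀ i₁ (P n (i₁ b)) ≠ ∞) ∧
    (∀ a : E₀, Filter.Tendsto (fun n => enormOf i₀ (P n (i₀ a) - i₀ a)) Filter.atTop (nhds 0)) ∧
    (∀ b : E₁, Filter.Tendsto (fun n => enormOf i₁ (P n (i₁ b) - i₁ b)) Filter.atTop (nhds 0))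

/-- Persson's approximation condition for the couple `(E₀, E₁)`. -/
def PerssonCondition (i₀ : E₀ →ₗ[ℝ] V) (i₁ : E₁ →ₗ[ℝ] V) : Prop :=
  ∀ K : Set E₀, IsCompact K →
    ∃ (C : ℝ) (P : Set (V →ₗ[ℝ] V)), 0 < C ∧
      (∀ p ∈ P,
        (∀ a : E₀, einterNorm i₀ i₁ (p (i₀ a)) ≠ ∞ ∧
          enormOf i₀ (p (i₀ a)) ≤ ENNReal.ofReal (C * ‖a‖)) ∧
        (∀ b : E₁, einterNorm i₀ i₁ (p (i₁ b)) ≠ ∞ ∧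
          enormOf i₁ (p (i₁ b)) ≤ ENNReal.ofReal (C * ‖b‖))) ∧
      (∀ ε > 0, ∃ p ∈ P, ∀ x ∈ K, enormOf i₀ (p (i₀ x) - i₀ x) < ENNReal.ofReal ε)

end LP

end

noncomputable section

variable {G : Type*} [AddCommGroup G] [Module ℝ G]

/-- The `ℓ^q_g(G_n)` extended norm of a sequence, for a weight function `g`:
`‖(a_n)‖ = ‖(g(2^{-n}) ‖a_n‖_n)_n‖_{ℓ^q(ℤ)}`. -/
def lqSeqNorm (Nn : ℤ → G → ℝ≥0∞) (q : ℝ≥0∞) (g : ℝ → ℝ) (a : ℤ → G) : ℝ≥0∞ :=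
  eLq q (fun n => ENNReal.ofReal (g ((2 : ℝ) ^ (-n))) * Nn n (a n))

/-!
Two coordinatewise facts pin down the `K`-functional of the couple: up to a factor of `2`, `K(t, a)`
is the `ℓ^q` norm of `min(1, t 2⁻ᵐ) ‖a_m‖_m`, and it dominates each of these terms. The term `m = n`
of `K(2ⁿ, a)` gives `‖a‖_{f,q} ≤ ‖a‖_{ρ,q;K}`. Conversely, `1/ρ(2ⁿ) ≤ ρ̄(2^{m-n})/ρ(2ᵐ)` bounds
`K(2ⁿ, a)/ρ(2ⁿ)` by the `ℓ^q` norm in `m` of `u_{m-n} ‖a_m‖_m/ρ(2ᵐ)`, where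
`u_j = min(1, 2⁻ʲ) ρ̄(2ʲ)`, and taking the `ℓ^q` norm in `n` factors out `‖u‖_q`.

It remains to see that `‖u‖_q < ∞` for every `q > 0`. As a finite, lower semicontinuous,
submultiplicative function, `ρ̄` is locally bounded by Baire's theorem, so the integral condition of
`ℬ^{+-}` gives `∑ u_j < ∞`. Since `u` is submultiplicative on each of the half-lines `j ≥ 0` and
`j ≤ 0`, tending to `0` forces geometric decay, and `∑ u_j^p < ∞` for all `p > 0`.
-/

section Submultiplicative

lemma bddAbove_image_of_isCompact_of_submultiplicative {H : Type*} [AddGroup H] [TopologicalSpace H]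
    [ContinuousAdd H] [BaireSpace H] {f : H → ℝ} (hf : LowerSemicontinuous f)
    (hf_nonneg : ∀ x, 0 ≤ f x) (hf_add : ∀ x y, f (x + y) ≤ f x * f y) {K : Set H}
    (hK : IsCompact K) : BddAbove (f '' K) := by
  obtain ⟨M, x₀, hx₀⟩ : ∃ M : ℕ, (interior (f ⁻¹' Iic (M : ℝ))).Nonempty :=
    nonempty_interior_of_iUnion_of_closed (fun M => hf.isClosed_preimage M)
      (eq_univ_of_forall fun x => mem_iUnion.2 (exists_nat_ge (f x)))
  refine hK.induction_on (p := fun s => BddAbove (f '' s)) (by simp)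
    (fun s t hst ht => ht.mono (image_mono hst))
    (fun s t hs ht => by rw [image_union]; exact hs.union ht) fun x _ => ?_
  -- Translating by `x₀ - x` moves a neighbourhood of `x` into the set where `f ≤ M`.
  have htranslate : (fun y => x₀ + (-x + y)) ⁻¹' (f ⁻¹' Iic (M : ℝ)) ∈ nhds x := by
    refine ContinuousAt.preimage_mem_nhds (by fun_prop) ?_
    simpa using mem_interior_iff_mem_nhds.1 hx₀
  refine ⟨_, mem_nhdsWithin_of_mem_nhds htranslate, f (x + -x₀) * M, ?_⟩
  rintro _ ⟨y, hy, rfl⟩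
  calc f y = f (x + -x₀ + (x₀ + (-x + y))) := by simp [add_assoc]
    _ ≤ f (x + -x₀) * f (x₀ + (-x + y)) := hf_add _ _
    _ ≤ f (x + -x₀) * M := mul_le_mul_of_nonneg_left hy (hf_nonneg _)

lemma tsum_ne_top_of_submultiplicative_of_lt_one {v : ℕ → ℝ≥0∞}
    (hv : ∀ m n, v (m + n) ≤ v m * v n) (hv_top : ∀ n, v n ≠ ∞) {m : ℕ} [NeZero m]
    (hm : v m < 1) : ∑' n, v n ≠ ∞ := by
  have hpow (k r : ℕ) : v (k * m + r) ≤ v m ^ k * v r := by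
    induction k with
    | zero => simp
    | succ k ih =>
      calc v ((k + 1) * m + r) = v (m + (k * m + r)) := by ring_nf
        _ ≤ v m * (v m ^ k * v r) := (hv _ _).trans (mul_le_mul_right ih _)
        _ = v m ^ (k + 1) * v r := by ring
  have hle : ∑' n, v n ≤ (1 - v m)⁻¹ * ∑ r : Fin m, v r := by
    calc ∑' n, v n = ∑' p : ℕ × Fin m, v (p.1 * m + p.2) :=
          ((Nat.divModEquiv m).symm.tsum_eq v).symm
      _ = ∑' k : ℕ, ∑' r : Fin m, v (k * m + r) :=
          ENNReal.tsum_prod (f := fun k (r : Fin m) => v (k * m + r))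
      _ ≤ ∑' k : ℕ, ∑' r : Fin m, v m ^ k * v r :=
          ENNReal.tsum_le_tsum fun k => ENNReal.tsum_le_tsum fun r => hpow k r
      _ = (1 - v m)⁻¹ * ∑ r : Fin m, v r := by
          simp_rw [ENNReal.tsum_mul_left, ENNReal.tsum_mul_right, ENNReal.tsum_geometric,
            tsum_fintype]
  refine ne_top_of_le_ne_top (ENNReal.mul_ne_top ?_ ?_) hle
  · exact ENNReal.inv_ne_top.2 (tsub_pos_of_lt hm).ne'
  · exact ENNReal.sum_ne_top.2 fun r _ => hv_top r

lemma tsum_rpow_ne_top_of_submultiplicative {v : ℕ → ℝ≥0∞} (hv : ∀ m n, v (m + n) ≤ v m * v n)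
    (hsum : ∑' n, v n ≠ ∞) {p : ℝ} (hp : 0 < p) : ∑' n, v n ^ p ≠ ∞ := by
  have htendsto : Tendsto v atTop (nhds 0) :=
    Nat.cofinite_eq_atTop ▸ ENNReal.tendsto_cofinite_zero_of_tsum_ne_top hsum
  obtain ⟨m, hm_lt, hm_ge⟩ :=
    ((htendsto.eventually_lt_const one_pos).and (eventually_ge_atTop 1)).exists
  have : NeZero m := ⟨by omega⟩
  refine tsum_ne_top_of_submultiplicative_of_lt_one (m := m) (fun k n => ?_)
    (fun n => ENNReal.rpow_ne_top_of_nonneg hp.le (ENNReal.ne_top_of_tsum_ne_top hsum n))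
    (ENNReal.rpow_lt_one hm_lt hp)
  rw [← ENNReal.mul_rpow_of_nonneg _ _ hp.le]
  exact ENNReal.rpow_le_rpow (hv k n) hp.le

lemma tsum_int_rpow_ne_top_of_submultiplicative {u : ℤ → ℝ≥0∞}
    (hpos : ∀ m n : ℕ, u (m + n) ≤ u m * u n) (hneg : ∀ m n : ℕ, u (-m + -n) ≤ u (-m) * u (-n))
    (hsum : ∑' n, u n ≠ ∞) {p : ℝ} (hp : 0 < p) : ∑' n, u n ^ p ≠ ∞ := by
  have hsum_comp {e : ℕ → ℤ} (he : e.Injective) : ∑' n, u (e n) ≠ ∞ :=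
    ne_top_of_le_ne_top hsum (ENNReal.tsum_comp_le_tsum_of_injective he u)
  have hsum_pos : ∑' n : ℕ, u n ^ p ≠ ∞ :=
    tsum_rpow_ne_top_of_submultiplicative (v := fun n => u n) (by simpa using hpos)
      (hsum_comp Nat.cast_injective) hp
  have hsum_neg : ∑' n : ℕ, u (-n) ^ p ≠ ∞ :=
    tsum_rpow_ne_top_of_submultiplicative (v := fun n => u (-n))
      (by simpa [neg_add, add_comm] using hneg)
      (hsum_comp (neg_injective.comp Nat.cast_injective)) hp
  rw [tsum_of_nat_of_neg_add_one ENNReal.summable ENNReal.summable]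
  refine ENNReal.add_ne_top.2 ⟨hsum_pos, ne_top_of_le_ne_top hsum_neg ?_⟩
  simpa using ENNReal.tsum_comp_le_tsum_of_injective (add_left_injective 1)
    fun n : ℕ => u (-n) ^ p

end Submultiplicative

section FunctionParameter

variable {ρ : ℝ → ℝ} {s t : ℝ}

namespace IsClassB

lemma rbar_le_iff (h : IsClassB ρ) (hs : 0 < s) {M : ℝ} :
    rbar ρ s ≤ M ↔ ∀ t > 0, ρ (s * t) ≤ M * ρ t := by
  rw [rbar, csSup_le_iff (h.bdd s hs) ⟨_, 1, one_pos, rfl⟩]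
  constructor
  · exact fun hM t ht => (div_le_iff₀ (h.pos t ht)).1 (hM _ ⟨t, ht, rfl⟩)
  · rintro hM _ ⟨t, ht, rfl⟩
    exact (div_le_iff₀ (h.pos t ht)).2 (hM t ht)

lemma apply_mul_le (h : IsClassB ρ) (hs : 0 < s) (ht : 0 < t) : ρ (s * t) ≤ rbar ρ s * ρ t :=
  (h.rbar_le_iff hs).1 le_rfl t ht

lemma rbar_pos (h : IsClassB ρ) (hs : 0 < s) : 0 < rbar ρ s := by
  have hle := h.apply_mul_le hs one_pos
  rw [h.one, mul_one, mul_one] at hle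
  exact (h.pos s hs).trans_le hle

lemma rbar_mul_le (h : IsClassB ρ) (hs : 0 < s) (ht : 0 < t) :
    rbar ρ (s * t) ≤ rbar ρ s * rbar ρ t := by
  refine (h.rbar_le_iff (mul_pos hs ht)).2 fun u hu => ?_
  calc ρ (s * t * u) = ρ (s * (t * u)) := by rw [mul_assoc]
    _ ≤ rbar ρ s * ρ (t * u) := h.apply_mul_le hs (mul_pos ht hu)
    _ ≤ rbar ρ s * (rbar ρ t * ρ u) :=
        mul_le_mul_of_nonneg_left (h.apply_mul_le ht hu) (h.rbar_pos hs).le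
    _ = rbar ρ s * rbar ρ t * ρ u := (mul_assoc _ _ _).symm

lemma lowerSemicontinuous_rbar_exp (h : IsClassB ρ) :
    LowerSemicontinuous fun x => rbar ρ (Real.exp x) := by
  refine lowerSemicontinuous_iff_isClosed_preimage.2 fun M => ?_
  have hpreimage : (fun x => rbar ρ (Real.exp x)) ⁻¹' Iic M =
      ⋂ t > 0, {x | ρ (Real.exp x * t) ≤ M * ρ t} := by
    ext x
    simp [h.rbar_le_iff (Real.exp_pos x)]
  rw [hpreimage]
  refine isClosed_biInter fun t ht => isClosed_le ?_ continuous_const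
  exact h.cont.comp_continuous (by fun_prop) fun x => mul_pos (Real.exp_pos x) ht

lemma bddAbove_rbar_image (h : IsClassB ρ) {K : Set ℝ} (hK : IsCompact K) (hK_pos : K ⊆ Ioi 0) :
    BddAbove (rbar ρ '' K) := by
  have hlog : IsCompact (Real.log '' K) :=
    hK.image_of_continuousOn (Real.continuousOn_log.mono fun s hs => (hK_pos hs).ne')
  have hbdd : BddAbove ((fun x => rbar ρ (Real.exp x)) '' (Real.log '' K)) :=
    bddAbove_image_of_isCompact_of_submultiplicative h.lowerSemicontinuous_rbar_exp
      (fun x => (h.rbar_pos (Real.exp_pos x)).le)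
      (fun x y => Real.exp_add x y ▸ h.rbar_mul_le (Real.exp_pos x) (Real.exp_pos y)) hlog
  rwa [image_image, image_congr fun s hs => by rw [Real.exp_log (hK_pos hs)]] at hbdd

end IsClassB

/-- The kernel `min(1, 1/t) ρ̄(t)` whose integral against `dt/t` defines the class `ℬ^{+-}`;
its dyadic samples control the `K`-functional of a couple of weighted sequence spaces. -/
def calderonKernel (ρ : ℝ → ℝ) (t : ℝ) : ℝ := min 1 t⁻¹ * rbar ρ t

lemma calderonKernel_pos (h : IsClassB ρ) (ht : 0 < t) : 0 < calderonKernel ρ t :=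
  mul_pos (by positivity) (h.rbar_pos ht)

lemma calderonKernel_mul_le_of_one_le (h : IsClassB ρ) (hs : 1 ≤ s) (ht : 1 ≤ t) :
    calderonKernel ρ (s * t) ≤ calderonKernel ρ s * calderonKernel ρ t := by
  have hs₀ : 0 < s := one_pos.trans_le hs
  have ht₀ : 0 < t := one_pos.trans_le ht
  have hmin {r : ℝ} (hr : 1 ≤ r) : min 1 r⁻¹ = r⁻¹ := min_eq_right (inv_le_one_of_one_le₀ hr)
  simp only [calderonKernel, hmin hs, hmin ht, hmin (one_le_mul_of_one_le_of_one_le hs ht)]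
  calc (s * t)⁻¹ * rbar ρ (s * t) ≤ (s * t)⁻¹ * (rbar ρ s * rbar ρ t) := by
        gcongr
        exact h.rbar_mul_le hs₀ ht₀
    _ = s⁻¹ * rbar ρ s * (t⁻¹ * rbar ρ t) := by rw [mul_inv]; ring

lemma calderonKernel_mul_le_of_le_one (h : IsClassB ρ) (hs₀ : 0 < s) (hs : s ≤ 1) (ht₀ : 0 < t)
    (ht : t ≤ 1) : calderonKernel ρ (s * t) ≤ calderonKernel ρ s * calderonKernel ρ t := by
  have hmin {r : ℝ} (hr₀ : 0 < r) (hr : r ≤ 1) : min 1 r⁻¹ = 1 :=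
    min_eq_left ((one_le_inv₀ hr₀).2 hr)
  simp only [calderonKernel, hmin hs₀ hs, hmin ht₀ ht,
    hmin (mul_pos hs₀ ht₀) (mul_le_one₀ hs ht₀.le ht), one_mul]
  exact h.rbar_mul_le hs₀ ht₀

lemma inv_le_two_mul_inv (hs : 0 < s) (ht : 0 < t) (hts : t ≤ 2 * s) : s⁻¹ ≤ 2 * t⁻¹ := by
  rw [← div_eq_mul_inv, le_div_iff₀ ht, inv_mul_le_iff₀ hs]
  linarith

lemma exists_calderonKernel_le_mul_of_mem_Icc (h : IsClassB ρ) :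
    ∃ C > 0, ∀ s > 0, ∀ t ∈ Icc s (2 * s), calderonKernel ρ s ≤ C * calderonKernel ρ t := by
  obtain ⟨M, hM⟩ := h.bddAbove_rbar_image (K := Icc 2⁻¹ 1) isCompact_Icc
    fun r hr => lt_of_lt_of_le (by norm_num) hr.1
  have hM_pos : 0 < M :=
    (h.rbar_pos one_pos).trans_le (hM (mem_image_of_mem _ (by norm_num)))
  refine ⟨2 * M, by positivity, fun s hs t ⟨hst, hts⟩ => ?_⟩
  have ht : 0 < t := hs.trans_le hst
  have hrbar : rbar ρ s ≤ M * rbar ρ t := by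
    have hratio : s / t ∈ Icc (2⁻¹ : ℝ) 1 :=
      ⟨by rw [le_div_iff₀ ht]; linarith, (div_le_one ht).2 hst⟩
    calc rbar ρ s = rbar ρ (s / t * t) := by rw [div_mul_cancel₀ _ ht.ne']
      _ ≤ rbar ρ (s / t) * rbar ρ t := h.rbar_mul_le (div_pos hs ht) ht
      _ ≤ M * rbar ρ t :=
          mul_le_mul_of_nonneg_right (hM (mem_image_of_mem _ hratio)) (h.rbar_pos ht).le
  have hmin : min 1 s⁻¹ ≤ 2 * min 1 t⁻¹ := by
    rw [mul_min_of_nonneg _ _ zero_le_two]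
    exact min_le_min (by norm_num) (inv_le_two_mul_inv hs ht hts)
  calc calderonKernel ρ s ≤ 2 * min 1 t⁻¹ * (M * rbar ρ t) :=
        mul_le_mul hmin hrbar (h.rbar_pos hs).le (by positivity)
    _ = 2 * M * calderonKernel ρ t := by rw [calderonKernel]; ring

lemma exists_ofReal_calderonKernel_le_setLIntegral (h : IsClassB ρ) :
    ∃ C : ℝ≥0∞, C ≠ ∞ ∧ ∀ s > 0, ENNReal.ofReal (calderonKernel ρ s) ≤
      C * ∫⁻ t in Ico s (2 * s), ENNReal.ofReal (calderonKernel ρ t * t⁻¹) := by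
  obtain ⟨C, hC, hle⟩ := exists_calderonKernel_le_mul_of_mem_Icc h
  refine ⟨ENNReal.ofReal (2 * C), ENNReal.ofReal_ne_top, fun s hs => ?_⟩
  have hpointwise : ∀ t ∈ Ico s (2 * s), calderonKernel ρ s * s⁻¹ ≤
      2 * C * (calderonKernel ρ t * t⁻¹) := by
    intro t ⟨hst, hts⟩
    have ht : 0 < t := hs.trans_le hst
    calc calderonKernel ρ s * s⁻¹ ≤ C * calderonKernel ρ t * (2 * t⁻¹) :=
          mul_le_mul (hle s hs t ⟨hst, hts.le⟩) (inv_le_two_mul_inv hs ht hts.le)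
            (by positivity) (mul_nonneg hC.le (calderonKernel_pos h ht).le)
      _ = 2 * C * (calderonKernel ρ t * t⁻¹) := by ring
  calc ENNReal.ofReal (calderonKernel ρ s)
      = ∫⁻ _ in Ico s (2 * s), ENNReal.ofReal (calderonKernel ρ s * s⁻¹) := by
        rw [setLIntegral_const, Real.volume_Ico, ← ENNReal.ofReal_mul]
        · congr 1
          field_simp
          ring
        · exact (mul_pos (calderonKernel_pos h hs) (inv_pos.2 hs)).le
    _ ≤ ∫⁻ t in Ico s (2 * s),
          ENNReal.ofReal (2 * C) * ENNReal.ofReal (calderonKernel ρ t * t⁻¹) := by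
        refine setLIntegral_mono' measurableSet_Ico fun t ht => ?_
        rw [← ENNReal.ofReal_mul (by positivity)]
        exact ENNReal.ofReal_le_ofReal (hpointwise t ht)
    _ = _ := lintegral_const_mul' _ _ ENNReal.ofReal_ne_top

lemma tsum_calderonKernel_two_zpow_ne_top (h : IsClassBpm ρ) :
    ∑' j : ℤ, ENNReal.ofReal (calderonKernel ρ (2 ^ j)) ≠ ∞ := by
  obtain ⟨C, hC, hle⟩ := exists_ofReal_calderonKernel_le_setLIntegral h.toIsClassB
  have hpow_pos (j : ℤ) : (0 : ℝ) < 2 ^ j := by positivity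
  have hsucc (j : ℤ) : (2 : ℝ) * 2 ^ j = 2 ^ Order.succ j := by
    rw [Order.succ_eq_add_one, zpow_add_one₀ two_ne_zero, mul_comm]
  have hdisj : Pairwise (Function.onFun Disjoint fun j : ℤ => Ico ((2 : ℝ) ^ j) (2 * 2 ^ j)) := by
    simp_rw [hsucc]
    exact (zpow_right_mono₀ one_le_two).pairwise_disjoint_on_Ico_succ
  refine ne_top_of_le_ne_top (ENNReal.mul_ne_top hC h.integ.setLIntegral_lt_top.ne) ?_
  calc ∑' j : ℤ, ENNReal.ofReal (calderonKernel ρ (2 ^ j))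
      ≤ ∑' j : ℤ, C * ∫⁻ t in Ico ((2 : ℝ) ^ j) (2 * 2 ^ j),
          ENNReal.ofReal (calderonKernel ρ t * t⁻¹) :=
        ENNReal.tsum_le_tsum fun j => hle _ (hpow_pos j)
    _ = C * ∫⁻ t in ⋃ j : ℤ, Ico ((2 : ℝ) ^ j) (2 * 2 ^ j),
          ENNReal.ofReal (calderonKernel ρ t * t⁻¹) := by
        rw [ENNReal.tsum_mul_left, lintegral_iUnion (fun _ => measurableSet_Ico) hdisj]
    _ ≤ C * ∫⁻ t in Ioi 0, ENNReal.ofReal (calderonKernel ρ t * t⁻¹) := by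
        gcongr
        exact iUnion_subset fun j t ht => (hpow_pos j).trans_le ht.1

lemma tsum_calderonKernel_two_zpow_rpow_ne_top (h : IsClassBpm ρ) {p : ℝ} (hp : 0 < p) :
    ∑' j : ℤ, ENNReal.ofReal (calderonKernel ρ (2 ^ j)) ^ p ≠ ∞ := by
  have hB := h.toIsClassB
  refine tsum_int_rpow_ne_top_of_submultiplicative
    (u := fun j => ENNReal.ofReal (calderonKernel ρ (2 ^ j))) (fun m n => ?_) (fun m n => ?_)
    (tsum_calderonKernel_two_zpow_ne_top h) hp
  all_goals
    rw [← ENNReal.ofReal_mul (calderonKernel_pos hB (by positivity)).le, zpow_add₀ two_ne_zero]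
    apply ENNReal.ofReal_le_ofReal
  · exact calderonKernel_mul_le_of_one_le hB (one_le_zpow₀ one_le_two (by simp))
      (one_le_zpow₀ one_le_two (by simp))
  · exact calderonKernel_mul_le_of_le_one hB (by positivity)
      (zpow_le_one_of_nonpos₀ one_le_two (by simp)) (by positivity)
      (zpow_le_one_of_nonpos₀ one_le_two (by simp))

end FunctionParameter

section LqNorm

variable {q : ℝ≥0∞}

lemma eLq_mono {a b : ℤ → ℝ≥0∞} (h : ∀ n, a n ≤ b n) : eLq q a ≤ eLq q b := by
  unfold eLq
  split_ifs
  · exact iSup_mono h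
  · gcongr with n
    exact h n

lemma eLq_const_mul (hq : 0 < q) (c : ℝ≥0∞) (a : ℤ → ℝ≥0∞) :
    eLq q (fun n => c * a n) = c * eLq q a := by
  unfold eLq
  split_ifs with h
  · rw [ENNReal.mul_iSup]
  · have hq' : 0 < q.toReal := ENNReal.toReal_pos hq.ne' h
    simp_rw [ENNReal.mul_rpow_of_nonneg _ _ hq'.le]
    rw [ENNReal.tsum_mul_left, ENNReal.mul_rpow_of_nonneg _ _ (by positivity), one_div,
      ENNReal.rpow_rpow_inv hq'.ne']

lemma le_eLq (hq : 0 < q) (a : ℤ → ℝ≥0∞) (n : ℤ) : a n ≤ eLq q a := by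
  unfold eLq
  split_ifs with h
  · exact le_iSup a n
  · have hq' : 0 < q.toReal := ENNReal.toReal_pos hq.ne' h
    rw [one_div, ENNReal.le_rpow_inv_iff hq']
    exact ENNReal.le_tsum (f := fun n => a n ^ q.toReal) n

lemma eLq_eLq_sub_mul (hq : 0 < q) (u z : ℤ → ℝ≥0∞) :
    eLq q (fun n => eLq q fun m => u (m - n) * z m) = eLq q u * eLq q z := by
  by_cases h : q = ∞
  · have hshift (m : ℤ) : ⨆ n, u (m - n) = ⨆ j, u j := (Equiv.subLeft m).iSup_comp
    simp only [eLq, h, if_true]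
    rw [iSup_comm]
    simp_rw [← ENNReal.iSup_mul, hshift, ENNReal.mul_iSup]
  · have hq' : 0 < q.toReal := ENNReal.toReal_pos hq.ne' h
    have hshift (m : ℤ) : ∑' n, u (m - n) ^ q.toReal = ∑' j, u j ^ q.toReal :=
      (Equiv.subLeft m).tsum_eq fun j => u j ^ q.toReal
    simp only [eLq, h, if_false, one_div, ENNReal.rpow_inv_rpow hq'.ne']
    rw [← ENNReal.mul_rpow_of_nonneg _ _ (by positivity), ENNReal.tsum_comm]
    simp_rw [ENNReal.mul_rpow_of_nonneg _ _ hq'.le, ENNReal.tsum_mul_right, hshift,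
      ENNReal.tsum_mul_left]

lemma eLq_calderonKernel_two_zpow_ne_top {ρ : ℝ → ℝ} (h : IsClassBpm ρ) (hq : 0 < q) :
    eLq q (fun j => ENNReal.ofReal (calderonKernel ρ (2 ^ j))) ≠ ∞ := by
  unfold eLq
  split_ifs with hq_top
  · exact ne_top_of_le_ne_top (tsum_calderonKernel_two_zpow_ne_top h)
      (iSup_le fun j => ENNReal.le_tsum j)
  · exact ENNReal.rpow_ne_top_of_nonneg (by positivity)
      (tsum_calderonKernel_two_zpow_rpow_ne_top h (ENNReal.toReal_pos hq.ne' hq_top))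

end LqNorm

section KFunctional

variable {X : Type*} [AddCommGroup X] {N : ℤ → X → ℝ≥0∞} {q : ℝ≥0∞}

lemma min_one_mul_le_eKgen (hN_add : ∀ n x y, N n (x + y) ≤ N n x + N n y) (hq : 0 < q) {t : ℝ}
    (ht : 0 ≤ t) (a : ℤ → X) (n : ℤ) :
    ENNReal.ofReal (min 1 (t * 2 ^ (-n))) * N n (a n) ≤
      eKgen (lqSeqNorm N q fun _ => 1) (lqSeqNorm N q fun t => t) t a := by
  refine le_iInf fun y => ?_
  have hle₀ : N n ((a - y) n) ≤ lqSeqNorm N q (fun _ => 1) (a - y) := by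
    simpa [lqSeqNorm] using le_eLq hq (fun m => ENNReal.ofReal 1 * N m ((a - y) m)) n
  have hle₁ : ENNReal.ofReal (2 ^ (-n)) * N n (y n) ≤ lqSeqNorm N q (fun t => t) y :=
    le_eLq hq (fun m => ENNReal.ofReal (2 ^ (-m)) * N m (y m)) n
  calc ENNReal.ofReal (min 1 (t * 2 ^ (-n))) * N n (a n)
      ≤ ENNReal.ofReal (min 1 (t * 2 ^ (-n))) * (N n ((a - y) n) + N n (y n)) := by
        gcongr
        simpa using hN_add n ((a - y) n) (y n)
    _ ≤ ENNReal.ofReal 1 * N n ((a - y) n) + ENNReal.ofReal (t * 2 ^ (-n)) * N n (y n) := by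
        rw [mul_add]
        gcongr
        · exact min_le_left _ _
        · exact min_le_right _ _
    _ = N n ((a - y) n) + ENNReal.ofReal t * (ENNReal.ofReal (2 ^ (-n)) * N n (y n)) := by
        rw [ENNReal.ofReal_one, one_mul, ENNReal.ofReal_mul ht, mul_assoc]
    _ ≤ _ := by gcongr

lemma eKgen_le_two_mul_eLq_min_one (hN_zero : ∀ n, N n 0 = 0) (hq : 0 < q) {t : ℝ} (ht : 0 ≤ t)
    (a : ℤ → X) :
    eKgen (lqSeqNorm N q fun _ => 1) (lqSeqNorm N q fun t => t) t a ≤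
      2 * eLq q fun m => ENNReal.ofReal (min 1 (t * 2 ^ (-m))) * N m (a m) := by
  -- Near-optimal splitting: each coordinate goes to the space in which it is cheaper.
  refine (iInf_le _ fun m => if 1 ≤ t * 2 ^ (-m) then 0 else a m).trans ?_
  rw [two_mul]
  simp only [lqSeqNorm]
  rw [← eLq_const_mul hq]
  refine add_le_add (eLq_mono fun m => ?_) (eLq_mono fun m => ?_)
  · rw [Pi.sub_apply]
    split_ifs with h
    · rw [sub_zero, min_eq_left h]
    · simp only [sub_self, hN_zero, mul_zero, zero_le]
  · split_ifs with h
    · simp only [hN_zero, mul_zero, zero_le]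
    · rw [min_eq_right (not_le.1 h).le, ← mul_assoc, ← ENNReal.ofReal_mul ht]

variable {ρ : ℝ → ℝ}

lemma min_one_div_le_calderonKernel_div (h : IsClassB ρ) {s t : ℝ} (hs : 0 < s) (ht : 0 < t) :
    min 1 (s * t⁻¹) / ρ s ≤ calderonKernel ρ (t / s) * (ρ t)⁻¹ := by
  have hρ : (ρ s)⁻¹ ≤ rbar ρ (t / s) * (ρ t)⁻¹ := by
    have hle := h.apply_mul_le (div_pos ht hs) hs
    rw [div_mul_cancel₀ _ hs.ne'] at hle
    rwa [← div_eq_mul_inv, le_div_iff₀ (h.pos t ht), inv_mul_le_iff₀ (h.pos s hs), mul_comm]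
  calc min 1 (s * t⁻¹) / ρ s = min 1 (t / s)⁻¹ * (ρ s)⁻¹ := by
        rw [inv_div, div_eq_mul_inv, div_eq_mul_inv]
    _ ≤ min 1 (t / s)⁻¹ * (rbar ρ (t / s) * (ρ t)⁻¹) := by gcongr
    _ = calderonKernel ρ (t / s) * (ρ t)⁻¹ := (mul_assoc _ _ _).symm

lemma eKNormGen_le_mul_lqSeqNorm (hN_zero : ∀ n, N n 0 = 0) (h : IsClassB ρ) (hq : 0 < q)
    (a : ℤ → X) :
    eKNormGen (lqSeqNorm N q fun _ => 1) (lqSeqNorm N q fun t => t) ρ q a ≤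
      2 * eLq q (fun j => ENNReal.ofReal (calderonKernel ρ (2 ^ j))) *
        lqSeqNorm N q (fun t => (ρ t⁻¹)⁻¹) a := by
  have hρ_pos (n : ℤ) : 0 < ρ (2 ^ n) := h.pos _ (by positivity)
  have hweight (n m : ℤ) : (ENNReal.ofReal (ρ (2 ^ n)))⁻¹ *
      ENNReal.ofReal (min 1 (2 ^ n * 2 ^ (-m))) ≤
        ENNReal.ofReal (calderonKernel ρ (2 ^ (m - n))) *
          ENNReal.ofReal ((ρ ((2 ^ (-m))⁻¹))⁻¹) := by
    have hle := min_one_div_le_calderonKernel_div h (s := 2 ^ n) (t := 2 ^ m) (by positivity)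
      (by positivity)
    rw [← ENNReal.ofReal_inv_of_pos (hρ_pos n), ← ENNReal.ofReal_mul (by simp [(hρ_pos n).le]),
      ← ENNReal.ofReal_mul (calderonKernel_pos h (by positivity)).le]
    apply ENNReal.ofReal_le_ofReal
    rwa [zpow_sub₀ two_ne_zero, zpow_neg, inv_inv, mul_comm, ← div_eq_mul_inv]
  rw [mul_assoc, lqSeqNorm, ← eLq_eLq_sub_mul hq, ← eLq_const_mul hq]
  refine eLq_mono fun n => ?_
  calc eKgen (lqSeqNorm N q fun _ => 1) (lqSeqNorm N q fun t => t) (2 ^ n) a /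
        ENNReal.ofReal (ρ (2 ^ n))
      ≤ (ENNReal.ofReal (ρ (2 ^ n)))⁻¹ *
          (2 * eLq q fun m => ENNReal.ofReal (min 1 (2 ^ n * 2 ^ (-m))) * N m (a m)) := by
        rw [ENNReal.div_eq_inv_mul]
        gcongr
        exact eKgen_le_two_mul_eLq_min_one hN_zero hq (by positivity) a
    _ = 2 * eLq q fun m => (ENNReal.ofReal (ρ (2 ^ n)))⁻¹ *
          (ENNReal.ofReal (min 1 (2 ^ n * 2 ^ (-m))) * N m (a m)) := by
        rw [mul_left_comm, eLq_const_mul hq]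
    _ ≤ _ := by
        gcongr
        refine eLq_mono fun m => ?_
        rw [← mul_assoc, ← mul_assoc]
        exact mul_le_mul_left (hweight n m) _

lemma lqSeqNorm_le_eKNormGen (hN_add : ∀ n x y, N n (x + y) ≤ N n x + N n y)
    (hρ_pos : ∀ n : ℤ, 0 < ρ (2 ^ n)) (hq : 0 < q) (a : ℤ → X) :
    lqSeqNorm N q (fun t => (ρ t⁻¹)⁻¹) a ≤
      eKNormGen (lqSeqNorm N q fun _ => 1) (lqSeqNorm N q fun t => t) ρ q a := by
  refine eLq_mono fun n => ?_
  have hle := min_one_mul_le_eKgen hN_add hq (t := 2 ^ n) (by positivity) a n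
  rw [zpow_neg, mul_inv_cancel₀ (by positivity), min_self, ENNReal.ofReal_one, one_mul] at hle
  beta_reduce
  rw [ENNReal.div_eq_inv_mul, ← ENNReal.ofReal_inv_of_pos (hρ_pos n), ← zpow_neg, neg_neg]
  gcongr

end KFunctional

theorem statement8_general {X : Type*} [AddCommGroup X] (N : ℤ → X → ℝ≥0∞)
    (hN_zero : ∀ n, N n 0 = 0) (hN_add : ∀ n x y, N n (x + y) ≤ N n x + N n y)
    (ρ : ℝ → ℝ) (hρ : IsClassBpm ρ) (q : ℝ≥0∞) (hq : 0 < q) :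
    ∃ C > 0, ∀ a : ℤ → X,
      eKNormGen (lqSeqNorm N q (fun _ => 1)) (lqSeqNorm N q (fun t => t)) ρ q a ≤
        ENNReal.ofReal C * lqSeqNorm N q (fun t => (ρ t⁻¹)⁻¹) a ∧
      lqSeqNorm N q (fun t => (ρ t⁻¹)⁻¹) a ≤
        ENNReal.ofReal C *
          eKNormGen (lqSeqNorm N q (fun _ => 1)) (lqSeqNorm N q (fun t => t)) ρ q a := by
  set D := 2 * eLq q (fun j => ENNReal.ofReal (calderonKernel ρ (2 ^ j)))
  have hD : D ≠ ∞ :=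
    ENNReal.mul_ne_top ENNReal.ofNat_ne_top (eLq_calderonKernel_two_zpow_ne_top hρ hq)
  have hC : ENNReal.ofReal (D.toReal + 1) = D + 1 := by
    rw [ENNReal.ofReal_add ENNReal.toReal_nonneg zero_le_one, ENNReal.ofReal_toReal hD,
      ENNReal.ofReal_one]
  refine ⟨D.toReal + 1, by positivity, fun a => ⟨?_, ?_⟩⟩
  · refine (eKNormGen_le_mul_lqSeqNorm hN_zero hρ.toIsClassB hq a).trans ?_
    rw [hC]
    exact mul_le_mul_left le_self_add _
  · refine (lqSeqNorm_le_eKNormGen hN_add (fun n => hρ.pos _ (by positivity)) hq a).trans ?_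
    rw [hC]
    exact le_mul_of_one_le_left zero_le le_add_self

/-- Theorem 2.1: let `G` carry a sequence of Banach norms `(‖·‖_n)_{n∈ℤ}`
such that `(ℓ^q₀(G_n), ℓ^q₁(G_n))` is a Banach couple. Then for `ρ ∈ ℬ^{+-}` and
`0 < q ≤ ∞`, `(ℓ^q₀(G_n), ℓ^q₁(G_n))_{ρ,q;K} = ℓ^q_f(G_n)` with equivalent norms,
where `f(t) = 1/ρ(t⁻¹)`. -/
theorem statement8 (Nn : ℤ → G → ℝ≥0∞)
    (hN : ∀ n, IsENorm (Nn n)) (hfin : ∀ n x, Nn n x ≠ ∞)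
    (ρ : ℝ → ℝ) (hρ : IsClassBpm ρ) (q : ℝ≥0∞) (hq : 0 < q)
    (hcouple₀ : IsENorm (lqSeqNorm Nn q (fun _ => 1)))
    (hcouple₁ : IsENorm (lqSeqNorm Nn q (fun t => t))) :
    ∃ C > 0, ∀ a : ℤ → G,
      eKNormGen (lqSeqNorm Nn q (fun _ => 1)) (lqSeqNorm Nn q (fun t => t)) ρ q a ≤
        ENNReal.ofReal C * lqSeqNorm Nn q (fun t => (ρ t⁻¹)⁻¹) a ∧
      lqSeqNorm Nn q (fun t => (ρ t⁻¹)⁻¹) a ≤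
        ENNReal.ofReal C *
          eKNormGen (lqSeqNorm Nn q (fun _ => 1)) (lqSeqNorm Nn q (fun t => t)) ρ q a :=
  statement8_general Nn (fun n => (hN n).map_zero) (fun n => (hN n).add_le) ρ hρ q hq

end
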